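/- Let η be the pseudo-Euclidean bilinear form of signature (2,2) on ℝ⁴, let ξ : ℝ⁴ → ℝ⁴ be an η-skew linear map, and let N, X satisfy η(N,N) = −1, η(X,X) = 0, η(N,X) = 0 and η(X, ξN) = 0. Then the three vectors X, ξX, ξN are linearly dependent. -/

import Mathlib

/-!
Skewness of `ξ` and the hypotheses place `X`, `ξ X` and `ξ N` in the orthogonal complement of
`{N, X}`. If they were linearly independent, then adjoining `N`, which is not orthogonal to itself,
would give four independent vectors, hence a basis of `ℝ⁴`. Every vector of that basis is orthogonal
to `X`, so nondegeneracy of `eta` (`eq_zero_of_eta_eq_zero`) gives `X = 0`, a contradiction.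
-/

/-- The pseudo-Euclidean bilinear form of signature `(2, m-2)` on `ℝ^m`:
`η(u,v) = -u₀v₀ - u₁v₁ + ∑_{i≥2} uᵢvᵢ`. -/
noncomputable def eta {m : ℕ} (u v : Fin m → ℝ) : ℝ :=
  ∑ i : Fin m, (if (i : ℕ) < 2 then (-1 : ℝ) else 1) * (u i * v i)

lemma eta_comm {m : ℕ} (u v : Fin m → ℝ) : eta u v = eta v u := by
  simp only [eta, mul_comm (u _)]

lemma eta_add_right {m : ℕ} (u v w : Fin m → ℝ) : eta u (v + w) = eta u v + eta u w := by
  simp only [eta, Pi.add_apply, mul_add, Finset.sum_add_distrib]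

lemma eta_smul_right {m : ℕ} (c : ℝ) (u v : Fin m → ℝ) : eta u (c • v) = c * eta u v := by
  simp only [eta, Pi.smul_apply, smul_eq_mul, Finset.mul_sum]
  exact Finset.sum_congr rfl fun i _ => by ring

lemma eta_eq_zero_of_mem_span {m : ℕ} (u : Fin m → ℝ) (S : Set (Fin m → ℝ))
    (h : ∀ v ∈ S, eta u v = 0) {w : Fin m → ℝ} (hw : w ∈ Submodule.span ℝ S) : eta u w = 0 := by
  induction hw using Submodule.span_induction with
  | mem v hv => exact h v hv
  | zero => simp [eta]
  | add v w _ _ hv hw => rw [eta_add_right, hv, hw, add_zero]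
  | smul c v _ hv => rw [eta_smul_right, hv, mul_zero]

lemma eq_zero_of_eta_eq_zero {m : ℕ} (u : Fin m → ℝ) (h : ∀ v, eta u v = 0) : u = 0 := by
  funext i
  have hi := h (Pi.single i 1)
  simp only [eta, Pi.single_apply, mul_ite, mul_one, mul_zero, Finset.sum_ite_eq',
    Finset.mem_univ, if_true] at hi
  split_ifs at hi <;> simpa using hi

/-- in AdS₃ (signature (2,2) on ℝ⁴), the vectors X, ξX, ξN are always
linearly dependent. -/
theorem AdS3_always_degenerate
    (ξ : (Fin 4 → ℝ) →ₗ[ℝ] (Fin 4 → ℝ))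
    (hskew : ∀ u v : Fin 4 → ℝ, eta (ξ u) v + eta u (ξ v) = 0)
    (N X : Fin 4 → ℝ)
    (hN : eta N N = -1) (hX : eta X X = 0) (hNX : eta N X = 0)
    (hXxiN : eta X (ξ N) = 0) :
    ¬ LinearIndependent ℝ ![X, ξ X, ξ N] := by
  intro hli
  have hXX : eta X (ξ X) = 0 := by
    have h := hskew X X
    rw [eta_comm (ξ X)] at h
    linarith
  have hNN : eta N (ξ N) = 0 := by
    have h := hskew N N
    rw [eta_comm (ξ N)] at h
    linarith
  have hNξX : eta N (ξ X) = 0 := by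
    have h := hskew N X
    rw [eta_comm (ξ N), hXxiN] at h
    linarith
  have hnot : N ∉ Submodule.span ℝ (Set.range ![X, ξ X, ξ N]) := by
    intro hmem
    have h0 : eta N N = 0 := by
      refine eta_eq_zero_of_mem_span N _ ?_ hmem
      rintro _ ⟨i, rfl⟩
      fin_cases i <;> simpa
    linarith
  have hli4 : LinearIndependent ℝ (Fin.cons N ![X, ξ X, ξ N] : Fin 4 → Fin 4 → ℝ) :=
    linearIndependent_finCons.mpr ⟨hli, hnot⟩
  have htop := hli4.span_eq_top_of_card_eq_finrank (by simp)
  have hX0 : X = 0 := by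
    refine eq_zero_of_eta_eq_zero X fun v => ?_
    refine eta_eq_zero_of_mem_span X _ ?_ (htop ▸ Submodule.mem_top : v ∈ Submodule.span ℝ _)
    rintro _ ⟨i, rfl⟩
    have hXN : eta X N = 0 := by rw [eta_comm, hNX]
    fin_cases i
    · exact hXN
    · exact hX
    · exact hXX
    · exact hXxiN
  exact hli.ne_zero 0 hX0
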